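/- Let G be a commutative group, let N ≤ S ≤ G be submonoids, b ∈ N, ℓ ∈ ℕ, and Ω ⊆ Z_{N,ℓ}(b). Suppose S is Ω-admissible over N and b⁻¹ ∉ S. Let u ∈ G satisfy condition (i) or condition (ii), and set S' = S ⊔ Submonoid.powers (b^2 * u). Then S' is Ω-admissible over N. -/

import Mathlib

/-- The set of factorizations of `b` in the submonoid `S` of the group `G`. -/
def ZSet {G : Type*} [CommGroup G] (S : Submonoid G) (b : S) :
    Set (Multiset (Associates S)) :=
  {z | (∀ a ∈ z, Irreducible a) ∧ z.prod = Associates.mk b}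

/-- The set of length-`ℓ` factorizations of `b` in `S`. -/
def ZSetLen {G : Type*} [CommGroup G] (S : Submonoid G) (b : S) (ℓ : ℕ) :
    Set (Multiset (Associates S)) :=
  {z ∈ ZSet S b | Multiset.card z = ℓ}

/-- `u` is a unit of the submonoid `S` of the group `G`: `u⁻¹ ∈ S`. -/
def IsUnitIn {G : Type*} [CommGroup G] (S : Submonoid G) (u : G) : Prop :=
  u⁻¹ ∈ S

/-- `S` is unit-reflecting over `N`. -/
def UnitReflecting {G : Type*} [CommGroup G] (N S : Submonoid G) : Prop :=
  ∀ u ∈ S, IsUnitIn S u → ∀ x ∈ N, ∀ y ∈ N, u * y = x → u ∈ N ∧ IsUnitIn N u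

/-- `S` is `Ω`-admissible over `N`: `N ≤ S`, `S` is unit-reflecting over `N`, and
every `a ∈ N` whose class in `Associates ↥N` occurs in some `z ∈ Ω` has irreducible
class in `Associates ↥S`. -/
def OmegaAdmissible {G : Type*} [CommGroup G] (N S : Submonoid G)
    (Ω : Set (Multiset (Associates N))) : Prop :=
  N ≤ S ∧ UnitReflecting N S ∧
    ∀ (a : G) (haN : a ∈ N) (haS : a ∈ S),
      (∃ z ∈ Ω, Associates.mk (⟨a, haN⟩ : N) ∈ z) →
        Irreducible (Associates.mk (⟨a, haS⟩ : S))

/-- The survival order: `S₁ ≼ S₂` iff `S₁ ≤ S₂` and every element of `S₁` that is a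
unit of `↥S₂` is a unit of `↥S₁`. -/
def Prec {G : Type*} [CommGroup G] (S₁ S₂ : Submonoid G) : Prop :=
  S₁ ≤ S₂ ∧ ∀ u ∈ S₁, IsUnitIn S₂ u → IsUnitIn S₁ u

/-!
Let `t = b ^ 2 * u` and `T = S ⊔ powers t`. No positive power `t ^ n` divides `b` over `S`: the
square in `t` leaves a spare factor `b` after cancellation, so `(b * u ^ n)⁻¹` would lie in `S`,
which conditions (i) and (ii) both exclude because `b⁻¹ ∉ S`. Hence every divisor of `b` in `T`,
being of the form `s * t ^ n`, already lies in `S`. The units of `T` and the factors in `T` of the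
atoms in `Ω` are all divisors of `b`, so passing from `S` to `T` creates no new unit and splits no
atom.
-/

/-- Every divisor of `b` in the monoid `T` lies in `S`, where `x ∈ T` divides `b` in `T` when
`x⁻¹ * b ∈ T`. For `S ≤ T` this is what makes divisors of `b` factor in `T` as they do in `S`. -/
def ContainsDivisors {G : Type*} [CommGroup G] (S T : Submonoid G) (b : G) : Prop :=
  ∀ x ∈ T, x⁻¹ * b ∈ T → x ∈ S

-- `Associates.irreducible_mk` requires a zero element, which a submonoid of a group lacks.
theorem irreducible_associates_mk_iff {M : Type*} [CommMonoid M] {a : M} :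
    Irreducible (Associates.mk a) ↔ Irreducible a := by
  constructor
  · have : IsLocalHom (Associates.mkMonoidHom (M := M)) := ⟨fun _ ↦ Associates.isUnit_mk.1⟩
    exact .of_map (f := Associates.mkMonoidHom)
  · refine fun ha ↦ ⟨Associates.isUnit_mk.not.2 ha.not_isUnit, ?_⟩
    simp only [Associates.forall_associated, Associates.mk_mul_mk, Associates.isUnit_mk,
      Associates.mk_eq_mk_iff_associated]
    exact fun x y hxy ↦ (hxy.irreducible ha).isUnit_or_isUnit rfl

section

variable {G : Type*} [CommGroup G] {N S T : Submonoid G} {a b t u : G}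

theorem isUnit_iff_inv_mem {x : S} : IsUnit x ↔ (x : G)⁻¹ ∈ S := by
  refine ⟨fun hx ↦ ?_, fun hx ↦ .of_mul_eq_one ⟨_, hx⟩ (Subtype.ext (mul_inv_cancel _))⟩
  obtain ⟨y, hxy⟩ := hx.exists_right_inv
  exact inv_eq_of_mul_eq_one_right (congrArg Subtype.val hxy) ▸ y.2

theorem inv_mul_mem_iff_dvd {x y : S} : (x : G)⁻¹ * y ∈ S ↔ x ∣ y := by
  refine ⟨fun h ↦ ⟨⟨_, h⟩, Subtype.ext (mul_inv_cancel_left _ _).symm⟩, ?_⟩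
  rintro ⟨c, rfl⟩
  simp

theorem dvd_mk_of_mem_ZSet {b : S} {z : Multiset (Associates S)} (hz : z ∈ ZSet S b)
    {a : Associates S} (ha : a ∈ z) : a ∣ Associates.mk b :=
  hz.2 ▸ Multiset.dvd_prod ha

namespace ContainsDivisors

theorem of_dvd (h : ContainsDivisors S T b) (hab : a⁻¹ * b ∈ T) : ContainsDivisors S T a :=
  fun x hx hxa ↦ h x hx <| by simpa [mul_assoc] using T.mul_mem hxa hab

theorem mem_and_inv_mem (h : ContainsDivisors S T 1) {x : G} (hx : x ∈ T) (hx' : x⁻¹ ∈ T) :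
    x ∈ S ∧ x⁻¹ ∈ S :=
  ⟨h x hx (by simpa using hx'), h x⁻¹ hx' (by simpa using hx)⟩

theorem unitReflecting (h : ContainsDivisors S T 1) (hS : UnitReflecting N S) :
    UnitReflecting N T := fun u hu hu' ↦
  have ⟨huS, huS'⟩ := h.mem_and_inv_mem hu hu'
  hS u huS huS'

theorem irreducible_inclusion (hST : S ≤ T) {a : S} (h : ContainsDivisors S T a)
    (ha : Irreducible a) : Irreducible (Submonoid.inclusion hST a) := by
  have h_one : ContainsDivisors S T 1 := h.of_dvd (by simpa using hST a.2)
  refine ⟨fun hu ↦ ha.not_isUnit ?_, fun x y hxy ↦ ?_⟩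
  · exact isUnit_iff_inv_mem.2 (h_one.mem_and_inv_mem (hST a.2) (isUnit_iff_inv_mem.1 hu)).2
  · have hxy : (a : G) = x * y := congrArg Subtype.val hxy
    have hxS : (x : G) ∈ S := h x x.2 (by simp [hxy])
    have hyS : (y : G) ∈ S := h y y.2 (by simp [hxy, mul_comm (x : G)])
    have hunit := ha.isUnit_or_isUnit (a := ⟨x, hxS⟩) (b := ⟨y, hyS⟩) (Subtype.ext hxy)
    exact hunit.imp (.map (Submonoid.inclusion hST)) (.map (Submonoid.inclusion hST))

theorem sup_powers (ht : ∀ n, 1 ≤ n → (t ^ n)⁻¹ * b ∉ S) :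
    ContainsDivisors S (S ⊔ Submonoid.powers t) b := by
  intro x hx hxb
  obtain ⟨s, hs, _, ⟨n, rfl⟩, rfl⟩ := Submonoid.mem_sup.1 hx
  obtain ⟨r, hr, _, ⟨m, rfl⟩, hrm⟩ := Submonoid.mem_sup.1 hxb
  have hsr : (t ^ (n + m))⁻¹ * b = s * r := by
    rw [eq_inv_mul_iff_mul_eq] at hrm
    rw [inv_mul_eq_iff_eq_mul, ← hrm, pow_add]
    ac_rfl
  have hnm : n + m = 0 := by
    by_contra hne
    exact ht (n + m) (Nat.one_le_iff_ne_zero.2 hne) (hsr ▸ S.mul_mem hs hr)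
  obtain rfl : n = 0 := Nat.eq_zero_of_add_eq_zero_right hnm
  simpa using hs

end ContainsDivisors

theorem OmegaAdmissible.of_containsDivisors {Ω : Set (Multiset (Associates N))}
    (hadm : OmegaAdmissible N S Ω) (hST : S ≤ T) {b : N}
    (hΩ : ∀ z ∈ Ω, ∀ a ∈ z, a ∣ Associates.mk b) (h : ContainsDivisors S T b) :
    OmegaAdmissible N T Ω := by
  obtain ⟨hNS, hrefl, hirr⟩ := hadm
  have hNT : N ≤ T := hNS.trans hST
  have h_one : ContainsDivisors S T 1 := h.of_dvd (by simpa using hNT b.2)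
  refine ⟨hNT, h_one.unitReflecting hrefl, ?_⟩
  rintro a haN - ⟨z, hz, haz⟩
  have hab : a⁻¹ * b ∈ N := inv_mul_mem_iff_dvd.2 (Associates.mk_dvd_mk.1 (hΩ z hz _ haz))
  have haS := hirr a haN (hNS haN) ⟨z, hz, haz⟩
  rw [irreducible_associates_mk_iff] at haS ⊢
  exact (h.of_dvd (hNT hab)).irreducible_inclusion hST haS

theorem inv_mul_pow_notMem (hb : b ∈ S) (hbu : b⁻¹ ∉ S)
    (hcond : (∃ n₀ : ℕ, 1 ≤ n₀ ∧ u ^ n₀ ∈ S) ∨ (∀ n : ℕ, 1 ≤ n → ∀ q ∈ S, u ^ n * q ≠ 1))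
    {n : ℕ} (hn : 1 ≤ n) : (b * u ^ n)⁻¹ ∉ S := by
  intro hmem
  rcases hcond with ⟨m, hm, hum⟩ | hne
  · obtain ⟨k, rfl⟩ := Nat.exists_eq_add_of_le' hm
    have hb_inv : b⁻¹ = (b * u ^ n)⁻¹ ^ (k + 1) * (u ^ (k + 1)) ^ n * b ^ k := by
      rw [inv_pow, mul_pow, pow_right_comm u, mul_inv, inv_mul_cancel_right, pow_succ', mul_inv,
        inv_mul_cancel_right]
    exact hbu (hb_inv ▸ S.mul_mem (S.mul_mem (S.pow_mem hmem _) (S.pow_mem hum _)) (S.pow_mem hb _))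
  · exact hne n hn (b * (b * u ^ n)⁻¹) (S.mul_mem hb hmem) (by simp)

theorem inv_sq_mul_pow_mul_notMem (hb : b ∈ S) {n : ℕ} (hn : 1 ≤ n) (h : (b * u ^ n)⁻¹ ∉ S) :
    ((b ^ 2 * u) ^ n)⁻¹ * b ∉ S := by
  intro hmem
  obtain ⟨k, rfl⟩ := Nat.exists_eq_add_of_le' hn
  have hpow : (b ^ 2 * u) ^ (k + 1) = b * b ^ (2 * k) * (b * u ^ (k + 1)) := by
    rw [mul_pow, ← pow_mul, ← mul_assoc, ← pow_succ', ← pow_succ, mul_add_one]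
  have hinv : (b * u ^ (k + 1))⁻¹ = ((b ^ 2 * u) ^ (k + 1))⁻¹ * b * b ^ (2 * k) := by
    rw [mul_assoc, hpow, mul_inv_rev _ (b * _), inv_mul_cancel_right]
  exact h (hinv ▸ S.mul_mem hmem (S.pow_mem hb _))

theorem atoms_do_not_split_general {Ω : Set (Multiset (Associates N))} {b : N}
    (hΩ : ∀ z ∈ Ω, ∀ a ∈ z, a ∣ Associates.mk b) (hadm : OmegaAdmissible N S Ω)
    (ht : ∀ n, 1 ≤ n → (t ^ n)⁻¹ * b ∉ S) :
    OmegaAdmissible N (S ⊔ Submonoid.powers t) Ω :=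
  hadm.of_containsDivisors le_sup_left hΩ (.sup_powers ht)

end

/-- Atoms used by `Ω` do not split: if `S` is `Ω`-admissible over `N`, `b` is not a
unit of `↥S`, and `u` satisfies condition (i) or condition (ii), then
`S' = S ⊔ powers (b^2 * u)` is again `Ω`-admissible over `N`. -/
theorem atoms_do_not_split {G : Type*} [CommGroup G] (N S : Submonoid G)
    (b : G) (hb : b ∈ N) (ℓ : ℕ) (Ω : Set (Multiset (Associates N)))
    (hΩ : Ω ⊆ ZSetLen N ⟨b, hb⟩ ℓ)
    (hadm : OmegaAdmissible N S Ω) (hbu : b⁻¹ ∉ S) (u : G)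
    (hcond : (∃ n₀ : ℕ, 1 ≤ n₀ ∧ u ^ n₀ ∈ S) ∨
      (∀ n : ℕ, 1 ≤ n → ∀ q ∈ S, u ^ n * q ≠ 1)) :
    OmegaAdmissible N (S ⊔ Submonoid.powers (b ^ 2 * u)) Ω := by
  exact atoms_do_not_split_general (fun z hz a ↦ dvd_mk_of_mem_ZSet (hΩ hz).1) hadm fun n hn ↦
    inv_sq_mul_pow_mul_notMem (hadm.1 hb) hn (inv_mul_pow_notMem (hadm.1 hb) hbu hcond hn)
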